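/- arXiv:2108.00429 — 6 statements merged into one kernel-verified Lean document; each statement's English description precedes it below -/
import Mathlib

section
/- Every integer m ≥ 36 can be written as the sum of the squares of fifteen positive integers that are all at most √(m/3 − 3); that is, there exist positive integers a₁, …, a₁₅ with m = a₁² + ⋯ + a₁₅² and 3·aᵢ² ≤ m − 9 for every i ∈ {1, …, 15}. -/
/-!
For `m ≥ 124`, write `m = S + r`, where `S` is a sum of ten squares, each equal to `t²` or
`(t + 1)²`, and `r` is a sum of five positive squares. Here `t` is maximal with
`10 t² + 34 ≤ m`, and replacing one `t²` by `(t + 1)²` changes `S` by `2t + 1`, so `r` can be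
placed in the window `34 ≤ r ≤ 34 + 2t`. Every number `≥ 34` is a sum of five positive squares
(`five_pos_squares`), each of them at most `r - 4`, which is small enough once `t ≥ 3`.

For `36 ≤ m < 124`, the entries `1, 2, 3, 4` suffice: `m - 15` has the form `3k + 8l + 15c` with
`k + l + c ≤ 15`, and `c = 0` when `m` is too small for an entry `4`.
-/

/-- A list of length fifteen serves as the tuple, so that repeated entries can be handled with
`List.replicate`. -/
lemma exists_tuple_of_list (m : ℕ) (s : List ℕ) (hlen : s.length = 15)
    (hsum : (s.map (· ^ 2)).sum = m) (hs : ∀ x ∈ s, 0 < x ∧ 3 * x ^ 2 + 9 ≤ m) :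
    ∃ a : Fin 15 → ℕ, (∀ i, 0 < a i) ∧ m = ∑ i, (a i) ^ 2 ∧
      ∀ i, 3 * (a i) ^ 2 + 9 ≤ m := by
  obtain ⟨a, rfl⟩ : ∃ a : Fin 15 → ℕ, List.ofFn a = s := by
    rw [← hlen]
    exact ⟨s.get, List.ofFn_get s⟩
  have h : ∀ i, a i ∈ List.ofFn a := fun i => (List.mem_ofFn' a (a i)).2 ⟨i, rfl⟩
  refine ⟨a, fun i => (hs _ (h i)).1, ?_, fun i => (hs _ (h i)).2⟩
  rw [← hsum, List.map_ofFn, List.sum_ofFn]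
  rfl

set_option synthInstance.maxSize 1000 in
lemma five_pos_squares_small : ∀ r < 169, 34 ≤ r →
    ∃ a < 2, ∃ b < 3, ∃ c < 5, ∃ d < 6, ∃ e < 12,
      (a + 1) ^ 2 + (b + 1) ^ 2 + (c + 1) ^ 2 + (d + 1) ^ 2 + (e + 1) ^ 2 = r := by
  decide +kernel

/-- For `r ≥ 169`, take a four-square representation of `r - 169` with `k` nonzero terms and
complete it using that `169` is a sum of `5 - k` positive squares for every `k ≤ 4`. -/
lemma five_pos_squares (r : ℕ) (hr : 34 ≤ r) : ∃ a b c d e : ℕ,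
    (0 < a ∧ 0 < b ∧ 0 < c ∧ 0 < d ∧ 0 < e) ∧ a ^ 2 + b ^ 2 + c ^ 2 + d ^ 2 + e ^ 2 = r := by
  rcases lt_or_ge r 169 with h | h
  · obtain ⟨a, -, b, -, c, -, d, -, e, -, h⟩ := five_pos_squares_small r h hr
    exact ⟨a + 1, b + 1, c + 1, d + 1, e + 1, by simp, h⟩
  · obtain ⟨a, b, c, d, h4⟩ := Nat.sum_four_squares (r - 169)
    have h5 : a ^ 2 + b ^ 2 + c ^ 2 + d ^ 2 + 169 = r := by omega
    -- It suffices to treat the case where the nonzero terms precede the zero terms.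
    have key : ∀ a b c d : ℕ, (b = 0 ∨ 0 < a) → (c = 0 ∨ 0 < b) → (d = 0 ∨ 0 < c) →
        a ^ 2 + b ^ 2 + c ^ 2 + d ^ 2 + 169 = r → ∃ a b c d e : ℕ,
        (0 < a ∧ 0 < b ∧ 0 < c ∧ 0 < d ∧ 0 < e) ∧
          a ^ 2 + b ^ 2 + c ^ 2 + d ^ 2 + e ^ 2 = r := by
      intro a b c d hb hc hd h
      rcases Nat.eq_zero_or_pos a with ha | ha
      · exact ⟨12, 1, 2, 2, 4, by norm_num, by
          obtain rfl : b = 0 := by omega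
          obtain rfl : c = 0 := by omega
          obtain rfl : d = 0 := by omega
          subst ha; omega⟩
      rcases Nat.eq_zero_or_pos b with hb' | hb'
      · exact ⟨a, 11, 4, 4, 4, by simp [ha], by
          obtain rfl : c = 0 := by omega
          obtain rfl : d = 0 := by omega
          subst hb'; omega⟩
      rcases Nat.eq_zero_or_pos c with hc' | hc'
      · exact ⟨a, b, 3, 4, 12, by simp [ha, hb'], by
          obtain rfl : d = 0 := by omega
          subst hc'; omega⟩
      rcases Nat.eq_zero_or_pos d with hd' | hd'
      · exact ⟨a, b, c, 5, 12, by simp [ha, hb', hc'], by subst hd'; omega⟩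
      · exact ⟨a, b, c, d, 13, by simp [ha, hb', hc', hd'], by omega⟩
    rcases Nat.eq_zero_or_pos a with ha | ha <;> rcases Nat.eq_zero_or_pos b with hb | hb <;>
    rcases Nat.eq_zero_or_pos c with hc | hc <;> rcases Nat.eq_zero_or_pos d with hd | hd <;>
    first
    | exact key a b c d (by omega) (by omega) (by omega) (by omega)
    | exact key a b d c (by omega) (by omega) (by omega) (by omega)
    | exact key a c d b (by omega) (by omega) (by omega) (by omega)
    | exact key b c d a (by omega) (by omega) (by omega) (by omega)
    | exact key a d b c (by omega) (by omega) (by omega) (by omega)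
    | exact key b d a c (by omega) (by omega) (by omega) (by omega)
    | exact key c d a b (by omega) (by omega) (by omega) (by omega)
    | exact key d a b c (by omega) (by omega) (by omega) (by omega)

/-- Every `n ≥ 14` is `3 k + 8 l` with `k ≤ 7`; the number `c` of entries equal to `4` is chosen
so that at most fifteen entries differ from `1`. -/
lemma small_coefficients (m : ℕ) (hm : 36 ≤ m) (hm' : m < 124) : ∃ c l k j : ℕ,
    c + l + k + j = 15 ∧ 16 * c + 9 * l + 4 * k + j = m ∧ (c = 0 ∨ 57 ≤ m) := by
  have h : ∃ c k, k ≤ 7 ∧ 15 * c + 3 * k + 15 ≤ m ∧ (m - 15 - 15 * c - 3 * k) % 8 = 0 ∧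
      c + k + (m - 15 - 15 * c - 3 * k) / 8 ≤ 15 ∧ (c = 0 ∨ 57 ≤ m) := by
    rcases lt_or_ge m 87 with h | h
    · exact ⟨0, 3 * (m - 15) % 8, by omega, by omega, by omega, by omega, by omega⟩
    rcases lt_or_ge m 115 with h' | h'
    · rcases lt_or_ge m 89 with h'' | h''
      · exact ⟨3, 3 * (m - 60) % 8, by omega, by omega, by omega, by omega, by omega⟩
      · exact ⟨4, 3 * (m - 75) % 8, by omega, by omega, by omega, by omega, by omega⟩
    · rcases lt_or_ge m 120 with h'' | h''
      · exact ⟨5, 3 * (m - 90) % 8, by omega, by omega, by omega, by omega, by omega⟩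
      · exact ⟨6, 3 * (m - 105) % 8, by omega, by omega, by omega, by omega, by omega⟩
  obtain ⟨c, k, -, h1, h2, h3, h4⟩ := h
  exact ⟨c, (m - 15 - 15 * c - 3 * k) / 8, k,
    15 - c - k - (m - 15 - 15 * c - 3 * k) / 8, by omega, by omega, h4⟩

/-- Every integer `m ≥ 36` is the sum of the squares of fifteen positive integers
that are all at most `√(m/3 − 3)`, i.e. with `3 * aᵢ² + 9 ≤ m` for every `i`. -/
theorem sum_of_fifteen_bounded_squares (m : ℕ) (hm : 36 ≤ m) :
    ∃ a : Fin 15 → ℕ, (∀ i, 0 < a i) ∧ m = ∑ i, (a i) ^ 2 ∧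
      ∀ i, 3 * (a i) ^ 2 + 9 ≤ m := by
  rcases lt_or_ge m 124 with h | h
  · obtain ⟨c, l, k, j, h1, h2, h3⟩ := small_coefficients m hm h
    refine exists_tuple_of_list m (List.replicate c 4 ++ List.replicate l 3 ++
      List.replicate k 2 ++ List.replicate j 1) (by simp; omega) (by simp; omega) ?_
    intro x hx
    simp only [List.mem_append, List.mem_replicate] at hx
    rcases hx with ((⟨h, rfl⟩ | ⟨h, rfl⟩) | ⟨h, rfl⟩) | ⟨h, rfl⟩ <;> constructor <;> omega
  · obtain ⟨t, ht, ht'⟩ : ∃ t : ℕ, 10 * t ^ 2 + 34 ≤ m ∧ m < 10 * (t + 1) ^ 2 + 34 := by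
      have h1 := Nat.sqrt_le' ((m - 34) / 10)
      have h2 := Nat.lt_succ_sqrt' ((m - 34) / 10)
      exact ⟨Nat.sqrt ((m - 34) / 10), by omega, by
        rw [Nat.succ_eq_add_one] at h2; omega⟩
    have ht3 : 3 ≤ t := by
      by_contra! h3
      have : t + 1 ≤ 3 := by omega
      nlinarith
    -- `q` is the number of entries equal to `t + 1`.
    obtain ⟨q, u, hqu, hu⟩ : ∃ q u, (2 * t + 1) * q + u = m - 34 - 10 * t ^ 2 ∧ u < 2 * t + 1 :=
      ⟨_, _, Nat.div_add_mod _ (2 * t + 1), Nat.mod_lt _ (by omega)⟩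
    have hm_eq : m = 10 * t ^ 2 + (2 * t + 1) * q + (34 + u) := by omega
    have hq : q < 10 := by
      by_contra! h3
      nlinarith
    obtain ⟨a, b, c, d, e, ⟨ha, hb, hc, hd, he⟩, hr⟩ := five_pos_squares (34 + u) (by omega)
    have hbound : 99 + 6 * t ≤ m := by nlinarith
    refine exists_tuple_of_list m (List.replicate q (t + 1) ++ List.replicate (10 - q) t ++
      [a, b, c, d, e]) (by simp; omega) ?_ ?_
    · obtain ⟨p, hp⟩ : ∃ p, p + q = 10 := ⟨10 - q, by omega⟩
      have hp' : 10 - q = p := by omega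
      simp only [List.map_append, List.map_replicate, List.sum_append, List.sum_replicate,
        List.map_cons, List.map_nil, List.sum_cons, List.sum_nil, smul_eq_mul]
      rw [hm_eq, ← hr, hp', ← hp]
      ring
    · have ha' : 0 < a ^ 2 := by positivity
      have hb' : 0 < b ^ 2 := by positivity
      have hc' : 0 < c ^ 2 := by positivity
      have hd' : 0 < d ^ 2 := by positivity
      have he' : 0 < e ^ 2 := by positivity
      intro x hx
      simp only [List.mem_append, List.mem_replicate, List.mem_cons, List.not_mem_nil,
        or_false] at hx
      rcases hx with (⟨-, rfl⟩ | ⟨-, rfl⟩) | rfl | rfl | rfl | rfl | rfl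
      · exact ⟨by omega, by nlinarith⟩
      · exact ⟨by omega, by nlinarith⟩
      all_goals exact ⟨by assumption, by omega⟩
end

section
/- Every integer n ≥ 164 can be written as n = 2a² − (a₁² + a₂² + ⋯ + a₁₅²), where a, a₁, …, a₁₅ are integers satisfying a₁ ≥ a₂ ≥ ⋯ ≥ a₁₅ ≥ 1 and a > a₁ + a₂ + a₃ + a₄. -/
/-!
Take `a` to be least with `2a² ≥ n + 107`, so that `S = 2a² - n` lies in `[107, 4a + 105)`. Then
`S` is a sum of fifteen positive squares (`exists_fifteen_pos_sq`): `S - 107` is a sum of four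
squares by Lagrange, and `107 = 4 · 25 + 7`, where each `x² + 25` is a sum of two *positive*
squares, namely `x² + 5²`, or `3² + 4²` when `x = 0`. By Cauchy-Schwarz the four largest entries
have sum at most `2√S`, and this is less than `a` as soon as `a ≥ 31`, that is, for `n ≥ 1694`.

The remaining `n` are handled by a finite search among vectors with entries in `{1, 2, 3, 4}`.
-/

/-- The antitone vector of length 15 having `p` entries `≥ 2`, `q` entries `≥ 3` and `r` entries
`≥ 4`, all entries being at most 4 (for `r ≤ q ≤ p ≤ 15`). -/
def stair (p q r : ℕ) (i : Fin 15) : ℤ :=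
  1 + (if i.val < p then 1 else 0) + (if i.val < q then 1 else 0) + (if i.val < r then 1 else 0)

lemma stair_antitone (p q r : ℕ) : Antitone (stair p q r) := by
  intro i j hij
  have h : i.val ≤ j.val := hij
  unfold stair
  split_ifs <;> omega

lemma stair_sum_sq : ∀ p < 16, ∀ q < p + 1, ∀ r < q + 1,
    ∑ i, (stair p q r i) ^ 2 = 15 + 3 * (p : ℤ) + 5 * q + 7 * r := by
  decide +kernel

/-- The sum of the four largest entries of a `stair` is `4 + min p 4 + min q 4 + min r 4`. -/
lemma stair_top (p q r : ℕ) :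
    stair p q r 0 + stair p q r 1 + stair p q r 2 + stair p q r 3
      = ((4 + min p 4 + min q 4 + min r 4 : ℕ) : ℤ) := by
  have key : ∀ m : ℕ, ((if 0 < m then 1 else 0) + (if 1 < m then 1 else 0)
      + (if 2 < m then 1 else 0) + (if 3 < m then 1 else 0) : ℤ) = ((min m 4 : ℕ) : ℤ) := by
    intro m
    split_ifs <;> omega
  have hp := key p
  have hq := key q
  have hr := key r
  simp only [stair, Fin.val_zero, Fin.val_one, Fin.val_two, show ((3 : Fin 15) : ℕ) = 3 from rfl]
  push_cast at *
  linarith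

/-- For `n ≤ 483` the number `a` is searched for as well; `p` is determined by `a`, `q`, `r`. The
equation rules out the cases where the division or the subtraction defining `p` is inexact. -/
lemma search_small : ∀ n < 484, 164 ≤ n → ∃ a < 18, n + 15 ≤ 2 * a ^ 2 ∧
    ∃ q < 16, ∃ r < q + 1,
      n + (15 + 3 * ((2 * a ^ 2 - n - 15 - 5 * q - 7 * r) / 3) + 5 * q + 7 * r) = 2 * a ^ 2 ∧
        (2 * a ^ 2 - n - 15 - 5 * q - 7 * r) / 3 < 16 ∧
        q < (2 * a ^ 2 - n - 15 - 5 * q - 7 * r) / 3 + 1 ∧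
        4 + min ((2 * a ^ 2 - n - 15 - 5 * q - 7 * r) / 3) 4 + min q 4 + min r 4 < a := by
  decide +kernel

lemma search_medium : ∀ S < 148, 29 ≤ S → ∃ q < 16, ∃ r < q + 1,
    15 + 3 * ((S - 15 - 5 * q - 7 * r) / 3) + 5 * q + 7 * r = S ∧
      (S - 15 - 5 * q - 7 * r) / 3 < 16 ∧ q < (S - 15 - 5 * q - 7 * r) / 3 + 1 := by
  decide +kernel

/-- From `n = 484` on, the least `a` with `2a² ≥ n + 29` is at least 17, so that entries at most 4
automatically satisfy the bound on the sum of the four largest. -/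
lemma exists_stair (n : ℕ) (hlt : n < 1694) (hn : 164 ≤ n) :
    ∃ a p q r : ℕ, p < 16 ∧ q < p + 1 ∧ r < q + 1 ∧
      n + (15 + 3 * p + 5 * q + 7 * r) = 2 * a ^ 2 ∧
        4 + min p 4 + min q 4 + min r 4 < a := by
  rcases lt_or_ge n 484 with h | h
  · obtain ⟨a, -, -, q, -, r, hr, hsum, hp, hq, htop⟩ := search_small n h hn
    exact ⟨a, _, q, r, hp, hq, hr, hsum, htop⟩
  · obtain ⟨s, hs⟩ : ∃ s, s = Nat.sqrt ((n + 28) / 2) := ⟨_, rfl⟩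
    have hlo : s ^ 2 ≤ (n + 28) / 2 := hs ▸ Nat.sqrt_le' _
    have hhi : (n + 28) / 2 < (s + 1) ^ 2 := hs ▸ Nat.lt_succ_sqrt' _
    have h16 : 16 ≤ s := by
      rw [hs, Nat.le_sqrt']
      omega
    have h29 : s ≤ 29 := by
      by_contra! hc
      have : 30 ^ 2 ≤ s ^ 2 := Nat.pow_le_pow_left hc 2
      omega
    have hexp : (s + 1) ^ 2 = s ^ 2 + 2 * s + 1 := by ring
    obtain ⟨q, -, r, hr, hsum, hp, hq⟩ :=
      search_medium (2 * (s + 1) ^ 2 - n) (by omega) (by omega)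
    exact ⟨s + 1, _, q, r, hp, hq, hr, by omega, by omega⟩

lemma exists_two_pos_sq (x : ℕ) :
    ∃ u v : ℤ, 1 ≤ u ∧ 1 ≤ v ∧ u ^ 2 + v ^ 2 = (x : ℤ) ^ 2 + 25 := by
  rcases Nat.eq_zero_or_pos x with rfl | hx
  · exact ⟨3, 4, by norm_num⟩
  · exact ⟨x, 5, by omega, by norm_num, by norm_num⟩

lemma exists_fifteen_pos_sq (m : ℕ) :
    ∃ b : Fin 15 → ℤ, (∀ i, 1 ≤ b i) ∧ ∑ i, (b i) ^ 2 = (m : ℤ) + 107 := by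
  obtain ⟨x, y, z, w, h⟩ := Nat.sum_four_squares m
  obtain ⟨x₁, x₂, hx₁, hx₂, hx⟩ := exists_two_pos_sq x
  obtain ⟨y₁, y₂, hy₁, hy₂, hy⟩ := exists_two_pos_sq y
  obtain ⟨z₁, z₂, hz₁, hz₂, hz⟩ := exists_two_pos_sq z
  obtain ⟨w₁, w₂, hw₁, hw₂, hw⟩ := exists_two_pos_sq w
  refine ⟨![x₁, x₂, y₁, y₂, z₁, z₂, w₁, w₂, 1, 1, 1, 1, 1, 1, 1], ?_, ?_⟩
  · intro i
    fin_cases i <;> first | assumption | exact le_refl (1 : ℤ)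
  · have h' : (x : ℤ) ^ 2 + y ^ 2 + z ^ 2 + w ^ 2 = m := by exact_mod_cast h
    simp [Fin.sum_univ_succ]
    linarith

lemma exists_antitone_rearrangement (b : Fin 15 → ℤ) :
    ∃ σ : Equiv.Perm (Fin 15), Antitone (b ∘ σ) := by
  refine ⟨Tuple.sort (fun i => -b i), fun i j hij => ?_⟩
  have := Tuple.monotone_sort (fun i => -b i) hij
  simp only [Function.comp_apply] at this ⊢
  linarith

/-- Cauchy-Schwarz for the first four entries. -/
lemma top_four_lt (b : Fin 15 → ℤ) (a : ℤ) (ha : 0 < a) (h : 4 * ∑ i, (b i) ^ 2 < a ^ 2) :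
    b 0 + b 1 + b 2 + b 3 < a := by
  have hsub : ∑ i ∈ ({0, 1, 2, 3} : Finset (Fin 15)), (b i) ^ 2 ≤ ∑ i, (b i) ^ 2 :=
    Finset.sum_le_univ_sum_of_nonneg fun i => sq_nonneg (b i)
  have hfour : ∑ i ∈ ({0, 1, 2, 3} : Finset (Fin 15)), (b i) ^ 2
      = b 0 ^ 2 + (b 1 ^ 2 + (b 2 ^ 2 + b 3 ^ 2)) := by
    simp
  refine lt_of_pow_lt_pow_left₀ 2 ha.le ?_
  nlinarith [sq_nonneg (b 0 - b 1), sq_nonneg (b 0 - b 2), sq_nonneg (b 0 - b 3),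
    sq_nonneg (b 1 - b 2), sq_nonneg (b 1 - b 3), sq_nonneg (b 2 - b 3)]

/-- Every integer `n ≥ 164` can be written as `n = 2a² − (a₁² + ⋯ + a₁₅²)` with
`a₁ ≥ a₂ ≥ ⋯ ≥ a₁₅ ≥ 1` and `a > a₁ + a₂ + a₃ + a₄`. -/
theorem repr_two_a_sq_minus_fifteen_squares (n : ℤ) (hn : 164 ≤ n) :
    ∃ (a : ℤ) (b : Fin 15 → ℤ), Antitone b ∧ 1 ≤ b 14 ∧
      b 0 + b 1 + b 2 + b 3 < a ∧ n = 2 * a ^ 2 - ∑ i, (b i) ^ 2 := by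
  lift n to ℕ using by omega
  rcases lt_or_ge n 1694 with hlt | hge
  · obtain ⟨a, p, q, r, hp, hq, hr, hsum, htop⟩ := exists_stair n hlt (by omega)
    refine ⟨a, stair p q r, stair_antitone p q r, ?_, ?_, ?_⟩
    · unfold stair
      split_ifs <;> norm_num
    · rw [stair_top]
      exact_mod_cast htop
    · rw [stair_sum_sq p hp q hq r hr]
      zify at hsum
      linarith
  · -- `s + 1` is the least `a` with `n + 107 ≤ 2 * a ^ 2`
    obtain ⟨s, hs⟩ : ∃ s, s = Nat.sqrt ((n + 106) / 2) := ⟨_, rfl⟩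
    have hlo : s ^ 2 ≤ (n + 106) / 2 := hs ▸ Nat.sqrt_le' _
    have hhi : (n + 106) / 2 < (s + 1) ^ 2 := hs ▸ Nat.lt_succ_sqrt' _
    have h30 : 30 ≤ s := by
      rw [hs, Nat.le_sqrt']
      omega
    obtain ⟨m, hm⟩ : ∃ m, 2 * (s + 1) ^ 2 = n + 107 + m := Nat.exists_eq_add_of_le (by omega)
    have hlo' : 2 * s ^ 2 ≤ n + 106 := by omega
    obtain ⟨b, hpos, hb⟩ := exists_fifteen_pos_sq m
    obtain ⟨σ, hσ⟩ := exists_antitone_rearrangement b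
    have hsum : ∑ i, ((b ∘ σ) i) ^ 2 = (m : ℤ) + 107 := by
      rw [← hb]
      exact Equiv.sum_comp σ fun i => (b i) ^ 2
    zify at hm hlo' h30
    refine ⟨(s : ℤ) + 1, b ∘ σ, hσ, hpos _, top_four_lt _ _ (by omega) ?_, ?_⟩
    · rw [hsum]
      nlinarith
    · rw [hsum]
      linarith
end

section
/- Every integer n ≥ 1217 can be written as n = 2a² − (a₁² + a₂² + ⋯ + a₁₅²), where a, a₁, …, a₁₅ are positive integers such that a > 4·aᵢ for every i ∈ {1, …, 15}. -/
/-!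
Take the least `a` with `2a² ≥ n + 33` and put `S = 2a² - n`, so that `33 ≤ S ≤ 4a + 31`. Since
`n ≥ 1217`, we have `a ≥ 25`. It remains to write `S` as a sum of fifteen positive squares of
integers below `a / 4`.

* If `S ≤ 382`, integers in `{1, …, 6}` suffice (`sumSq_fifteen`), and `4 * 6 < 25 ≤ a`. Six squares
  already reach every value in `[24, 58]`, and if an interval `[A, B]` with `A + 34 ≤ B` is reached by
  `k` squares then `[A + 1, B + 36]` is reached by `k + 1` squares, by adding `1²` or `6²`.
* If `S > 382`, then `a ≥ 88`. Use ten ones and write `S - 10 ≥ 169` as a sum of five positive squares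
  (`sumSq_five`, a consequence of Lagrange's four-square theorem). Each of these is at most
  `4a + 21 < (a / 4)²`.
-/

/-- `S` is a sum of `k` squares of integers in `{1, …, m}`. -/
def SumSq (m : ℤ) (k : ℕ) (S : ℤ) : Prop :=
  ∃ b : Fin k → ℤ, (∀ i, 0 < b i ∧ b i ≤ m) ∧ S = ∑ i, b i ^ 2

lemma SumSq.zero (m : ℤ) : SumSq m 0 0 := ⟨Fin.elim0, fun i => i.elim0, by simp⟩

lemma SumSq.cons {m : ℤ} {k : ℕ} {S : ℤ} (x : ℤ) (hx : 0 < x) (hxm : x ≤ m)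
    (h : SumSq m k (S - x ^ 2)) : SumSq m (k + 1) S := by
  obtain ⟨b, hb, hS⟩ := h
  refine ⟨Fin.cons x b, fun i => ?_, ?_⟩
  · refine Fin.cases ?_ (fun j => ?_) i
    · simpa using ⟨hx, hxm⟩
    · simpa using hb j
  · rw [Fin.sum_univ_succ]
    simp only [Fin.cons_zero, Fin.cons_succ]
    linarith

lemma SumSq.add_ones {m : ℤ} (hm : 1 ≤ m) {k : ℕ} {S : ℤ} (h : SumSq m k S) (j : ℕ) :
    SumSq m (k + j) (S + j) := by
  induction j with
  | zero => simpa using h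
  | succ j ih =>
    refine SumSq.cons (k := k + j) 1 one_pos hm ?_
    convert ih using 1
    push_cast
    ring

lemma sumSq_six_base : ∀ S ∈ Finset.Icc (24 : ℕ) 58,
    ∃ x ∈ Finset.Icc 1 6, ∃ y ∈ Finset.Icc 1 6, ∃ z ∈ Finset.Icc 1 6, ∃ u ∈ Finset.Icc 1 6,
      ∃ v ∈ Finset.Icc 1 6, ∃ w ∈ Finset.Icc 1 6,
        x ^ 2 + y ^ 2 + z ^ 2 + u ^ 2 + v ^ 2 + w ^ 2 = S := by
  decide +kernel

lemma sumSq_six {S : ℤ} (h₁ : 24 ≤ S) (h₂ : S ≤ 58) : SumSq 6 6 S := by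
  lift S to ℕ using by omega
  obtain ⟨x, hx, y, hy, z, hz, u, hu, v, hv, w, hw, h⟩ :=
    sumSq_six_base S (Finset.mem_Icc.2 (by omega))
  simp only [Finset.mem_Icc] at hx hy hz hu hv hw
  refine .cons x (by omega) (by omega) <| .cons y (by omega) (by omega) <|
    .cons z (by omega) (by omega) <| .cons u (by omega) (by omega) <|
    .cons v (by omega) (by omega) <| .cons w (by omega) (by omega) ?_
  convert SumSq.zero 6 using 1
  rw [← h]
  push_cast
  ring

lemma sumSq_interval (j : ℕ) : ∀ S : ℤ, 24 + j ≤ S → S ≤ 58 + 36 * j → SumSq 6 (6 + j) S := by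
  induction j with
  | zero => exact fun S h₁ h₂ => sumSq_six (by simpa using h₁) (by simpa using h₂)
  | succ j ih =>
    intro S h₁ h₂
    push_cast at h₁ h₂
    by_cases hS : S ≤ 59 + 36 * j
    · exact .cons (k := 6 + j) 1 (by norm_num) (by norm_num) (ih _ (by omega) (by omega))
    · exact .cons (k := 6 + j) 6 (by norm_num) (by norm_num) (ih _ (by omega) (by omega))

lemma sumSq_fifteen {S : ℤ} (h₁ : 33 ≤ S) (h₂ : S ≤ 382) : SumSq 6 15 S :=
  sumSq_interval 9 S (by norm_num; omega) (by norm_num; omega)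

/-- Every integer `N ≥ 169` is a sum of five positive squares. Write `N - 169` as a sum of four
squares and keep the nonzero ones; the missing terms come from the fact that `169` is a sum of
`1`, `2`, `3`, `4` and `5` positive squares. -/
lemma sumSq_five {N m : ℤ} (hN : 169 ≤ N) (hm : 0 ≤ m) (hNm : N ≤ m ^ 2) : SumSq m 5 N := by
  -- The upper bounds on the bases are automatic, so positivity is all that must be arranged.
  suffices h : ∃ x y z u v : ℤ, 0 < x ∧ 0 < y ∧ 0 < z ∧ 0 < u ∧ 0 < v ∧
      N = x ^ 2 + y ^ 2 + z ^ 2 + u ^ 2 + v ^ 2 by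
    obtain ⟨x, y, z, u, v, hx, hy, hz, hu, hv, h⟩ := h
    have key : ∀ t : ℤ, t ^ 2 ≤ N → t ≤ m := fun t ht =>
      le_of_sq_le_sq (ht.trans hNm) hm
    refine .cons x hx (key x ?_) <| .cons y hy (key y ?_) <| .cons z hz (key z ?_) <|
      .cons u hu (key u ?_) <| .cons v hv (key v ?_) ?_
    iterate 5 nlinarith [sq_nonneg x, sq_nonneg y, sq_nonneg z, sq_nonneg u, sq_nonneg v]
    convert SumSq.zero m using 1
    linarith
  obtain ⟨M, hM⟩ := Int.eq_ofNat_of_zero_le (sub_nonneg.2 hN)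
  obtain ⟨p, q, r, s, h⟩ := Nat.sum_four_squares M
  have hNsum : N = 169 + (p ^ 2 + q ^ 2 + r ^ 2 + s ^ 2 : ℤ) := by
    have : (p ^ 2 + q ^ 2 + r ^ 2 + s ^ 2 : ℤ) = M := by exact_mod_cast h
    linarith
  clear hM h hNm
  subst hNsum
  -- The witnesses are `169 = 13² = 12² + 5² = 12² + 4² + 3² = 10² + 8² + 2² + 1² =
  -- 11² + 6² + 2² + 2² + 2²`, chosen by the number of vanishing terms.
  rcases p.eq_zero_or_pos with hp | hp <;> rcases q.eq_zero_or_pos with hq | hq <;>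
    rcases r.eq_zero_or_pos with hr | hr <;> rcases s.eq_zero_or_pos with hs | hs
  · exact ⟨11, 6, 2, 2, 2, by omega, by omega, by omega, by omega, by omega, by
      simp [hp, hq, hr, hs]⟩
  · exact ⟨10, 8, 2, 1, s, by omega, by omega, by omega, by omega, by omega, by
      simp only [hp, hq, hr]; push_cast; ring⟩
  · exact ⟨10, 8, 2, 1, r, by omega, by omega, by omega, by omega, by omega, by
      simp only [hp, hq, hs]; push_cast; ring⟩
  · exact ⟨12, 4, 3, r, s, by omega, by omega, by omega, by omega, by omega, by
      simp only [hp, hq]; push_cast; ring⟩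
  · exact ⟨10, 8, 2, 1, q, by omega, by omega, by omega, by omega, by omega, by
      simp only [hp, hr, hs]; push_cast; ring⟩
  · exact ⟨12, 4, 3, q, s, by omega, by omega, by omega, by omega, by omega, by
      simp only [hp, hr]; push_cast; ring⟩
  · exact ⟨12, 4, 3, q, r, by omega, by omega, by omega, by omega, by omega, by
      simp only [hp, hs]; push_cast; ring⟩
  · exact ⟨12, 5, q, r, s, by omega, by omega, by omega, by omega, by omega, by
      simp only [hp]; push_cast; ring⟩
  · exact ⟨10, 8, 2, 1, p, by omega, by omega, by omega, by omega, by omega, by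
      simp only [hq, hr, hs]; push_cast; ring⟩
  · exact ⟨12, 4, 3, p, s, by omega, by omega, by omega, by omega, by omega, by
      simp only [hq, hr]; push_cast; ring⟩
  · exact ⟨12, 4, 3, p, r, by omega, by omega, by omega, by omega, by omega, by
      simp only [hq, hs]; push_cast; ring⟩
  · exact ⟨12, 5, p, r, s, by omega, by omega, by omega, by omega, by omega, by
      simp only [hq]; push_cast; ring⟩
  · exact ⟨12, 4, 3, p, q, by omega, by omega, by omega, by omega, by omega, by
      simp only [hr, hs]; push_cast; ring⟩
  · exact ⟨12, 5, p, q, s, by omega, by omega, by omega, by omega, by omega, by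
      simp only [hr]; push_cast; ring⟩
  · exact ⟨12, 5, p, q, r, by omega, by omega, by omega, by omega, by omega, by
      simp only [hs]; push_cast; ring⟩
  · exact ⟨13, p, q, r, s, by omega, by omega, by omega, by omega, by omega, by
      ring⟩

theorem repr_two_a_sq_minus_fifteen_squares_strong (n : ℤ) (hn : 1217 ≤ n) :
    ∃ (a : ℤ) (b : Fin 15 → ℤ), 0 < a ∧ (∀ i, 0 < b i) ∧
      (∀ i, 4 * b i < a) ∧ n = 2 * a ^ 2 - ∑ i, (b i) ^ 2 := by
  suffices h : ∃ a m : ℤ, 4 * m < a ∧ 0 < a ∧ SumSq m 15 (2 * a ^ 2 - n) by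
    obtain ⟨a, m, hma, ha, b, hb, hS⟩ := h
    exact ⟨a, b, ha, fun i => (hb i).1, fun i => by linarith [(hb i).2], by linarith⟩
  have hex : ∃ a : ℕ, n + 33 ≤ 2 * (a : ℤ) ^ 2 :=
    ⟨(n + 33).toNat, by rw [Int.toNat_of_nonneg (by omega)]; nlinarith⟩
  obtain ⟨a, ha, hmin⟩ : ∃ a : ℤ, n + 33 ≤ 2 * a ^ 2 ∧ 25 ≤ a ∧ 2 * (a - 1) ^ 2 < n + 33 := by
    classical
    have h₁ := Nat.find_spec hex
    have h₂ : 25 ≤ Nat.find hex := by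
      by_contra! hlt
      have : (Nat.find hex : ℤ) ≤ 24 := by omega
      nlinarith
    have h₃ := Nat.find_min hex (m := Nat.find hex - 1) (by omega)
    refine ⟨Nat.find hex, h₁, by exact_mod_cast h₂, ?_⟩
    push Not at h₃
    rwa [Nat.cast_sub (by omega), Nat.cast_one] at h₃
  obtain ⟨ha25, hmin⟩ := hmin
  have hub : 2 * a ^ 2 - n ≤ 4 * a + 31 := by nlinarith
  by_cases hS : 2 * a ^ 2 - n ≤ 382
  · exact ⟨a, 6, by omega, by omega, sumSq_fifteen (by omega) hS⟩
  · -- The largest integer below `a / 4`.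
    obtain ⟨m, hm⟩ : ∃ m : ℤ, m = (a - 1) / 4 := ⟨_, rfl⟩
    have hm1 : 4 * m < a := by omega
    have hm2 : a ≤ 4 * m + 4 := by omega
    refine ⟨a, m, hm1, by omega, ?_⟩
    have h5 : SumSq m 5 (2 * a ^ 2 - n - 10) := sumSq_five (by omega) (by omega) (by nlinarith)
    have h15 := h5.add_ones (by omega) 10
    norm_num at h15
    exact h15
end

section
/- Every nonnegative integer is the sum of three triangular numbers; that is, for every integer m ≥ 0 there exist nonnegative integers a, b, c such that m = a(a+1)/2 + b(b+1)/2 + c(c+1)/2. -/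
/-!
Since `8 * (k * (k + 1) / 2) + 1 = (2 * k + 1) ^ 2`, the claim for `m` is equivalent to
`n = 8 * m + 3` being a sum of three squares: squares are `0`, `1` or `4` modulo `8`, so the
three squares are then automatically odd.

That `n` is a sum of three squares is shown by Dirichlet's argument.

* `rep_three_squares`: a positive definite ternary quadratic form with integral symmetric matrix
  of determinant `1` takes only values that are sums of three squares. This is the reduction of
  forms: unimodular substitutions turn such a form into `x² + y² + z²`.
* `exists_form`: some form of this kind takes the value `n`. With Dirichlet's theorem on primes in
  arithmetic progressions, choose `j` with `p = 4 * n * j + (n - 1) / 2` prime, and let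
  `d = 8 * j + 1`, so that `2 * p = d * n - 1`. As `p ≡ 1 [MOD 4]` and `d ≡ 1 [MOD 8]`, quadratic
  reciprocity for the Jacobi symbol gives
  `(-d / p) = (d / p) = (p / d) = (2 * p / d) = (-1 / d) = 1`.
  Hence `x² + d = 2 * p * a` for some integers `x`, `a`, and the form with matrix
  `!![a, x, 1; x, 2 * p, 0; 1, 0, n]` has determinant `d * n - 2 * p = 1`.
-/

/-- The ternary quadratic form with symmetric matrix `!![a, t, s; t, b, r; s, r, c]`. -/
def ternaryForm (a b c r s t x y z : ℤ) : ℤ :=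
  a * x ^ 2 + b * y ^ 2 + c * z ^ 2 + 2 * (r * y * z + s * x * z + t * x * y)

/-- Every residue class modulo `A > 0` has a representative in `[-A/2, A/2]`. -/
lemma exists_shift (A B : ℤ) (hA : 0 < A) :
    ∃ k : ℤ, -A ≤ 2 * (B + k * A) ∧ 2 * (B + k * A) ≤ A := by
  refine ⟨-((2 * B + A) / (2 * A)), ?_⟩
  have h1 := Int.mul_ediv_add_emod (2 * B + A) (2 * A)
  have h2 := Int.emod_nonneg (2 * B + A) (b := 2 * A) (by lia)
  have h3 := Int.emod_lt_of_pos (2 * B + A) (b := 2 * A) (by lia)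
  constructor <;> nlinarith

lemma four_sq_le (A B : ℤ) (h1 : -A ≤ 2 * B) (h2 : 2 * B ≤ A) : 4 * B ^ 2 ≤ A ^ 2 := by
  nlinarith

lemma eq_one_of_bounds (a A : ℤ) (ha : 0 < a) (hA : 0 < A) (h1 : 3 * A ^ 2 ≤ 4 * a)
    (h2 : 3 * a ^ 2 ≤ 4 * A) : a = 1 := by
  by_contra hne
  have h3 : 2 ≤ a := by lia
  have h4 : 3 * a ≤ 2 * A := by nlinarith
  nlinarith

/-- Reduction of positive definite ternary forms of determinant `1`, by lexicographic descent on
the leading minors `a` and `A = a * b - t ^ 2`, which `N` and `M` bound. The identity behind the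
descent is `a * f = (a * x + t * y + s * z) ^ 2 + G y z`, where `G` is the binary form with
coefficients `A`, `B = a * r - s * t`, `C = a * c - s ^ 2` and determinant `A * C - B ^ 2 = a`. -/
lemma rep_three_squares (N : ℕ) : ∀ M : ℕ, ∀ a b c r s t : ℤ, a ≤ N → a * b - t ^ 2 ≤ M →
    0 < a → 0 < a * b - t ^ 2 →
    a * b * c + 2 * r * s * t - a * r ^ 2 - b * s ^ 2 - c * t ^ 2 = 1 →
    ∀ x y z : ℤ, ∃ u v w : ℤ, ternaryForm a b c r s t x y z = u ^ 2 + v ^ 2 + w ^ 2 := by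
  induction N with
  | zero => intro M a b c r s t h1 _ h2; push_cast at h1; lia
  | succ N ihN =>
    intro M
    induction M with
    | zero => intro a b c r s t _ h1 _ h2; push_cast at h1; lia
    | succ M ihM =>
      intro a b c r s t haN hAM ha hA hdet x y z
      -- The substitution `y ↦ y + k * z` makes `2 * |B| ≤ A`.
      obtain ⟨k, hk1, hk2⟩ := exists_shift (a * b - t ^ 2) (a * r - s * t) hA
      obtain ⟨c', hc'⟩ : ∃ c', c' = c + b * k ^ 2 + 2 * r * k := ⟨_, rfl⟩
      obtain ⟨r', hr'⟩ : ∃ r', r' = r + b * k := ⟨_, rfl⟩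
      obtain ⟨s', hs'⟩ : ∃ s', s' = s + t * k := ⟨_, rfl⟩
      have hdet' : a * b * c' + 2 * r' * s' * t - a * r' ^ 2 - b * s' ^ 2 - c' * t ^ 2 = 1 := by
        rw [← hdet, hc', hr', hs']; ring
      have hB : a * r' - s' * t = a * r - s * t + k * (a * b - t ^ 2) := by
        rw [hr', hs']; ring
      rw [← hB] at hk1 hk2
      have hval : ternaryForm a b c r s t x y z
          = ternaryForm a b c' r' s' t x (y - k * z) z := by
        unfold ternaryForm; rw [hc', hr', hs']; ring
      rw [hval]
      generalize y - k * z = y'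
      clear hval hB hdet hc' hr' hs'
      have hG : (a * b - t ^ 2) * (a * c' - s' ^ 2) - (a * r' - s' * t) ^ 2 = a := by
        linear_combination a * hdet'
      have hCpos : 0 < a * c' - s' ^ 2 := by
        by_contra hneg
        nlinarith [sq_nonneg (a * r' - s' * t)]
      by_cases hCA : a * c' - s' ^ 2 < a * b - t ^ 2
      · -- Exchanging `y` and `z` keeps `a` and replaces `A` by the smaller `C`.
        obtain ⟨u, v, w, h⟩ := ihM a c' b r' t s' haN (by push_cast at hAM; lia) ha hCpos
          (by rw [← hdet']; ring) x z y'
        refine ⟨u, v, w, ?_⟩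
        rw [← h]; unfold ternaryForm; ring
      have hA2 : 3 * (a * b - t ^ 2) ^ 2 ≤ 4 * a := by
        have := four_sq_le _ _ hk1 hk2
        nlinarith
      -- The substitution `x ↦ x + l * y` makes `2 * |t| ≤ a` and does not change `G`.
      obtain ⟨l, hl1, hl2⟩ := exists_shift a t ha
      obtain ⟨b', hb'⟩ : ∃ b', b' = b + a * l ^ 2 + 2 * t * l := ⟨_, rfl⟩
      obtain ⟨q, hq⟩ : ∃ q, q = r' + s' * l := ⟨_, rfl⟩
      obtain ⟨t', ht'⟩ : ∃ t', t' = t + l * a := ⟨_, rfl⟩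
      have hdet'' : a * b' * c' + 2 * q * s' * t' - a * q ^ 2 - b' * s' ^ 2 - c' * t' ^ 2 = 1 := by
        rw [← hdet', hb', hq, ht']; ring
      have hAeq : a * b - t ^ 2 = a * b' - t' ^ 2 := by rw [hb', ht']; ring
      have hval : ternaryForm a b c' r' s' t x y' z
          = ternaryForm a b' c' q s' t' (x - l * y') y' z := by
        unfold ternaryForm; rw [hb', hq, ht']; ring
      rw [← ht'] at hl1 hl2
      rw [hval]
      generalize x - l * y' = x'
      rw [hAeq] at hA hA2
      have hb'pos : 0 < b' := by
        by_contra hneg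
        nlinarith [sq_nonneg t']
      rcases lt_or_ge b' a with hba | hba
      · -- Exchanging `x` and `y` replaces `a` by the smaller `b'`.
        obtain ⟨u, v, w, h⟩ := ihN (a * b' - t' ^ 2).toNat b' a c' s' q t'
          (by push_cast at haN; lia) (by rw [mul_comm b' a]; exact Int.self_le_toNat _)
          hb'pos (by rw [mul_comm b' a]; exact hA) (by rw [← hdet'']; ring) y' x' z
        refine ⟨u, v, w, ?_⟩
        rw [← h]; unfold ternaryForm; ring
      -- Now `3 * A ^ 2 ≤ 4 * a` and `3 * a ^ 2 ≤ 4 * A`, which forces `a = A = 1`.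
      have ha2 : 3 * a ^ 2 ≤ 4 * (a * b' - t' ^ 2) := by
        have := four_sq_le _ _ hl1 hl2
        nlinarith
      obtain rfl := eq_one_of_bounds a _ ha hA hA2 ha2
      have hA1 := eq_one_of_bounds _ 1 hA one_pos ha2 hA2
      have ht0 : t' = 0 := by lia
      have hb1 : b' = 1 := by rw [ht0] at hA1; linarith
      rw [ht0, hb1] at hdet''
      refine ⟨x' + s' * z, y' + q * z, z, ?_⟩
      rw [ht0, hb1]
      unfold ternaryForm
      linear_combination z ^ 2 * hdet''

open NumberTheorySymbols in
/-- The parameters `a`, `x`, `b = 2 * p` and `d` of a ternary form representing `8 * m + 3`. -/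
lemma exists_form (m : ℕ) : ∃ a x b d : ℤ, 0 < a ∧ 0 < d ∧ a * b - x ^ 2 = d ∧
    d * (8 * m + 3) - b = 1 := by
  have hcop : (4 * m + 1).Coprime (4 * (8 * m + 3)) := by
    have : 4 * (8 * m + 3) = 4 + (4 * m + 1) * 8 := by ring
    simp [this]
  obtain ⟨p, hpgt, hp, hmod⟩ := Nat.forall_exists_prime_gt_and_modEq (4 * m + 1)
    (by lia : 4 * (8 * m + 3) ≠ 0) hcop
  obtain ⟨j, hj⟩ := (Nat.modEq_iff_dvd' hpgt.le).1 hmod.symm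
  have hpj : p = 4 * (8 * m + 3) * j + (4 * m + 1) := by lia
  have hp4 : p % 4 = 1 := by
    have : p = 4 * ((8 * m + 3) * j + m) + 1 := by rw [hpj]; ring
    lia
  have h2p : (2 * p : ℤ) = (8 * j + 1) * (8 * m + 3) - 1 := by
    rw [hpj]; push_cast; ring
  have : Fact p.Prime := ⟨hp⟩
  have hpodd : Odd p := Nat.odd_iff.2 (by lia)
  have hdodd : Odd (8 * j + 1) := Nat.odd_iff.2 (by lia)
  have hm1p : J(-1 | p) = 1 := by
    rw [jacobiSym.at_neg_one hpodd, ZMod.χ₄_nat_one_mod_four hp4]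
  have hm1d : J(-1 | 8 * j + 1) = 1 := by
    rw [jacobiSym.at_neg_one hdodd, ZMod.χ₄_nat_one_mod_four (by lia)]
  have h2d : J(2 | 8 * j + 1) = 1 := by
    rw [jacobiSym.at_two hdodd, ZMod.χ₈_nat_eq_if_mod_eight]
    have h1 : (8 * j + 1) % 2 = 1 := by lia
    have h2 : (8 * j + 1) % 8 = 1 := by lia
    simp [h1, h2]
  have hpd : J(p | 8 * j + 1) = 1 := by
    have h1 : J(2 * p | 8 * j + 1) = J(-1 | 8 * j + 1) := by
      apply jacobiSym.mod_left'
      rw [h2p]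
      push_cast
      rw [sub_eq_add_neg, add_comm, Int.add_mul_emod_self_left]
    rwa [jacobiSym.mul_left, h2d, one_mul, hm1d] at h1
  have hdp : J(-((8 * j + 1 : ℕ) : ℤ) | p) = 1 := by
    rw [← neg_one_mul, jacobiSym.mul_left, hm1p, one_mul,
      jacobiSym.quadratic_reciprocity_one_mod_four (by lia) hpodd, hpd]
  obtain ⟨w, hw⟩ := ZMod.isSquare_of_jacobiSym_eq_one hdp
  have hdvd : (p : ℤ) ∣ (w.val : ℤ) ^ 2 + (8 * j + 1) := by
    rw [← ZMod.intCast_zmod_eq_zero_iff_dvd]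
    push_cast at hw ⊢
    rw [ZMod.natCast_zmod_val]
    linear_combination -hw
  -- Adding the odd number `p` if necessary makes the square root odd.
  obtain ⟨x, hxodd, hx⟩ : ∃ x : ℤ, x % 2 = 1 ∧ (p : ℤ) ∣ x ^ 2 + (8 * j + 1) := by
    rcases Int.emod_two_eq_zero_or_one (w.val : ℤ) with h | h
    · refine ⟨w.val + p, by lia, ?_⟩
      have : ((w.val : ℤ) + p) ^ 2 + (8 * j + 1)
          = (w.val : ℤ) ^ 2 + (8 * j + 1) + p * (2 * w.val + p) := by ring
      rw [this]
      exact hdvd.add (dvd_mul_right _ _)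
    · exact ⟨w.val, h, hdvd⟩
  have h2dvd : (2 : ℤ) ∣ x ^ 2 + (8 * j + 1) := by
    have : x ^ 2 % 2 = 1 := by rw [pow_two, Int.mul_emod, hxodd]; rfl
    lia
  have hcop2 : IsCoprime (2 : ℤ) p := by
    rw [Int.isCoprime_iff_gcd_eq_one]
    exact_mod_cast (Nat.coprime_two_left.2 hpodd)
  obtain ⟨a, hxa⟩ := hcop2.mul_dvd h2dvd hx
  refine ⟨a, x, 2 * p, 8 * j + 1, ?_, by positivity, by linear_combination -hxa, ?_⟩
  · have hp0 : (0 : ℤ) < 2 * p := by have := hp.pos; lia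
    have : 0 < 2 * (p : ℤ) * a := by rw [← hxa]; positivity
    exact pos_of_mul_pos_right this hp0.le
  · rw [h2p]; ring

lemma sum_three_squares (m : ℕ) : ∃ u v w : ℤ, (8 * m + 3 : ℤ) = u ^ 2 + v ^ 2 + w ^ 2 := by
  obtain ⟨a, x, b, d, ha, hd, h1, h2⟩ := exists_form m
  obtain ⟨u, v, w, h⟩ := rep_three_squares a.toNat d.toNat a b (8 * m + 3) 0 1 x
    (Int.self_le_toNat _) (by rw [h1]; exact Int.self_le_toNat _) ha (by rw [h1]; exact hd)
    (by linear_combination h2 + (8 * m + 3) * h1) 0 0 1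
  refine ⟨u, v, w, ?_⟩
  rw [← h]; unfold ternaryForm; ring

lemma sq_mod_eight (u : ℤ) : u ^ 2 % 8 = 1 ∧ u % 2 = 1 ∨ u ^ 2 % 8 = 0 ∨ u ^ 2 % 8 = 4 := by
  have h : u % 8 = 0 ∨ u % 8 = 1 ∨ u % 8 = 2 ∨ u % 8 = 3 ∨ u % 8 = 4 ∨ u % 8 = 5 ∨ u % 8 = 6 ∨
    u % 8 = 7 := by lia
  have h2 : u % 2 = u % 8 % 2 := by lia
  rw [h2, pow_two, Int.mul_emod]
  rcases h with h | h | h | h | h | h | h | h <;> simp [h]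

/-- An odd square is `8 * T + 1` with `T` triangular. -/
lemma odd_sq_eq (u : ℤ) (hu : u % 2 = 1) :
    ∃ a : ℕ, u ^ 2 = 8 * ((a * (a + 1) / 2 : ℕ) : ℤ) + 1 := by
  refine ⟨u.natAbs / 2, ?_⟩
  have h1 : u.natAbs = 2 * (u.natAbs / 2) + 1 := by lia
  generalize u.natAbs / 2 = a at *
  have h2 : 2 * (a * (a + 1) / 2) = a * (a + 1) :=
    Nat.mul_div_cancel' (Nat.even_mul_succ_self a).two_dvd
  rw [← Int.natAbs_sq, h1]
  zify at h2
  push_cast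
  linear_combination -4 * h2

/-- Gauss's Eureka theorem: every nonnegative integer is the sum of three
triangular numbers. -/
theorem sum_of_three_triangular (m : ℕ) :
    ∃ a b c : ℕ, m = a * (a + 1) / 2 + b * (b + 1) / 2 + c * (c + 1) / 2 := by
  obtain ⟨u, v, w, h⟩ := sum_three_squares m
  have hu := sq_mod_eight u
  have hv := sq_mod_eight v
  have hw := sq_mod_eight w
  obtain ⟨a, ha⟩ := odd_sq_eq u (by lia)
  obtain ⟨b, hb⟩ := odd_sq_eq v (by lia)
  obtain ⟨c, hc⟩ := odd_sq_eq w (by lia)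
  exact ⟨a, b, c, by lia⟩
end

section
/- Every integer m ≥ 24 is the sum of fifteen triangular numbers of the form C(aᵢ,2) = aᵢ(aᵢ−1)/2 with 1 ≤ aᵢ ≤ 1/2 + √(2m/5 + 33/4); that is, there exist integers a₁, …, a₁₅, each at least 1, with m = Σᵢ₌₁¹⁵ aᵢ(aᵢ−1)/2 and 5·(2aᵢ − 1)² ≤ 8m + 165 for every i ∈ {1, …, 15}. -/
/-!
Write `T(a) = a(a-1)/2`. Since `8 T(a) + 1 = (2a-1)²`, the size condition on `a` says
`5 T(a) ≤ m + 20`. Let `s ≥ 1` be the largest integer satisfying it. Four of the numbers are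
taken equal to `s` if `4 T(s) ≤ m`, and only three of them otherwise; let `n` be the remainder.
In the first case maximality, `m + 20 < 5 T(s+1)`, gives `2n < s² + 9s - 40 < 2s²`. In the second
case `n = m - 3 T(s) < T(s) < s²`, and `n ≥ 0` follows from `5 T(s) ≤ m + 20` and `m ≥ 24`, as
`T(s) ≠ 9`. By Lagrange's theorem `n` is a sum of four squares `x²` with `0 ≤ x < s`,
and each is a sum of two triangular numbers, `x² = T(x+1) + T(x)`, with `x + 1 ≤ s`.
This makes at most twelve triangular numbers; the others are `T(1) = 0`.
-/

/-- A square `x²` with `0 ≤ x < s` as a sum of two triangular numbers with indices in `[1, s]`. -/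
lemma sq_eq_add_triangular (x : ℕ) (s : ℤ) (hx : (x : ℤ) < s) :
    ∃ u v : ℤ, 1 ≤ u ∧ u ≤ s ∧ 1 ≤ v ∧ v ≤ s ∧
      u * (u - 1) / 2 + v * (v - 1) / 2 = (x : ℤ) ^ 2 := by
  rcases Nat.eq_zero_or_pos x with rfl | h
  · exact ⟨1, 1, by norm_num, by omega, by norm_num, by omega, by norm_num⟩
  · refine ⟨x + 1, x, by omega, by omega, by omega, by omega, ?_⟩
    obtain ⟨k, hk⟩ := (Int.even_mul_pred_self (x : ℤ)).two_dvd
    have h1 : ((x : ℤ) + 1) * (x + 1 - 1) = 2 * (k + x) := by linarith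
    rw [hk, h1, Int.mul_ediv_cancel_left _ two_ne_zero, Int.mul_ediv_cancel_left _ two_ne_zero]
    linarith

/-- The largest `s ≥ 1` whose triangular number is at most `(m + 20) / 5`. -/
lemma exists_largest_index (m : ℤ) (hm : 24 ≤ m) :
    ∃ s : ℤ, 1 ≤ s ∧ 5 * (s * (s - 1)) ≤ 2 * (m + 20) ∧ 2 * (m + 20) < 5 * (s * (s + 1)) := by
  have hex : ∃ t : ℕ, 2 * (m + 20) < 5 * ((t : ℤ) * (t + 1)) := by
    refine ⟨(m + 20).toNat, ?_⟩
    rw [Int.toNat_of_nonneg (by omega)]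
    nlinarith
  classical
  have hs := Nat.find_spec hex
  have hmin := fun k => Nat.find_min hex (m := k)
  generalize Nat.find hex = t at hs hmin
  cases t with
  | zero => simp at hs; omega
  | succ k =>
    have h := hmin k (Nat.lt_succ_self k)
    refine ⟨(k + 1 : ℕ), by omega, ?_, hs⟩
    push_cast
    linarith

/-- Every integer `m ≥ 24` is the sum of fifteen triangular numbers
`C(aᵢ,2) = aᵢ(aᵢ−1)/2` with `1 ≤ aᵢ ≤ 1/2 + √(2m/5 + 33/4)`, the bound being
expressed as `5 (2aᵢ − 1)² ≤ 8m + 165`. -/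
theorem sum_of_fifteen_bounded_triangular (m : ℤ) (hm : 24 ≤ m) :
    ∃ a : Fin 15 → ℤ, (∀ i, 1 ≤ a i) ∧ m = ∑ i, a i * (a i - 1) / 2 ∧
      ∀ i, 5 * (2 * a i - 1) ^ 2 ≤ 8 * m + 165 := by
  obtain ⟨s, hs1, hs, hs'⟩ := exists_largest_index m hm
  obtain ⟨t, ht⟩ := (Int.even_mul_pred_self s).two_dvd
  have hst : s * (s - 1) / 2 = t := by rw [ht, Int.mul_ediv_cancel_left _ two_ne_zero]
  obtain ⟨r, t', hr1, hrs, hrt, hn, hlt⟩ : ∃ r t' : ℤ, 1 ≤ r ∧ r ≤ s ∧ r * (r - 1) / 2 = t' ∧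
      0 ≤ m - 3 * t - t' ∧ m - 3 * t - t' < s ^ 2 := by
    by_cases h4 : 4 * t ≤ m
    · exact ⟨s, t, hs1, le_refl s, hst, by linarith, by nlinarith [sq_nonneg (2 * s - 9)]⟩
    · refine ⟨1, 0, le_refl 1, hs1, by norm_num, ?_, by nlinarith⟩
      -- `5t ≤ m + 20` gives `3t ≤ m` unless `t = 9`, which is not triangular.
      have h9 : t ≠ 9 := by
        rintro rfl
        have h5 : s < 6 := by nlinarith
        interval_cases s <;> omega
      omega
  obtain ⟨x, y, z, w, h⟩ := Nat.sum_four_squares (m - 3 * t - t').toNat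
  have h' : (x : ℤ) ^ 2 + (y : ℤ) ^ 2 + (z : ℤ) ^ 2 + (w : ℤ) ^ 2 = m - 3 * t - t' := by
    rw [← Int.toNat_of_nonneg hn]
    exact_mod_cast h
  have key : ∀ q : ℕ, (q : ℤ) ^ 2 ≤ m - 3 * t - t' → (q : ℤ) < s := fun q hq =>
    lt_of_pow_lt_pow_left₀ 2 (by omega) (hq.trans_lt hlt)
  have hx := sq_nonneg (x : ℤ)
  have hy := sq_nonneg (y : ℤ)
  have hz := sq_nonneg (z : ℤ)
  have hw := sq_nonneg (w : ℤ)
  obtain ⟨a₁, b₁, ha₁, ha₁', hb₁, hb₁', e₁⟩ := sq_eq_add_triangular x s (key x (by linarith))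
  obtain ⟨a₂, b₂, ha₂, ha₂', hb₂, hb₂', e₂⟩ := sq_eq_add_triangular y s (key y (by linarith))
  obtain ⟨a₃, b₃, ha₃, ha₃', hb₃, hb₃', e₃⟩ := sq_eq_add_triangular z s (key z (by linarith))
  obtain ⟨a₄, b₄, ha₄, ha₄', hb₄, hb₄', e₄⟩ := sq_eq_add_triangular w s (key w (by linarith))
  have hrange : ∀ i, 1 ≤ (![s, s, s, r, a₁, b₁, a₂, b₂, a₃, b₃, a₄, b₄, 1, 1, 1] : Fin 15 → ℤ) i ∧
      (![s, s, s, r, a₁, b₁, a₂, b₂, a₃, b₃, a₄, b₄, 1, 1, 1] : Fin 15 → ℤ) i ≤ s := by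
    intro i
    fin_cases i <;> constructor <;> first | assumption | exact le_refl _
  refine ⟨_, fun i => (hrange i).1, ?_, fun i => ?_⟩
  · simp only [Fin.sum_univ_succ, Fin.sum_univ_zero, Matrix.cons_val_zero, Matrix.cons_val_succ,
      hst, hrt]
    norm_num
    linarith
  · obtain ⟨h1, h2⟩ := hrange i
    generalize (![s, s, s, r, a₁, b₁, a₂, b₂, a₃, b₃, a₄, b₄, 1, 1, 1] : Fin 15 → ℤ) i = c at *
    have : (2 * c - 1) ^ 2 ≤ (2 * s - 1) ^ 2 := pow_le_pow_left₀ (by linarith) (by linarith) 2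
    linarith
end

section
/- Every integer n ≥ 187 can be written as n = a² − Σᵢ₌₁¹⁵ aᵢ(aᵢ−1)/2, where a, a₁, …, a₁₅ are positive integers such that a > 4·aᵢ − 2 for every i ∈ {1, …, 15}. -/
/-!
Let `a` be the least positive integer with `n ≤ a²`, so that `N = a² - n` satisfies
`0 ≤ N ≤ 2a - 2` and `a ≥ 14`. It remains to write `N` as a sum of fifteen triangular numbers
`b(b-1)/2` with `4b - 2 < a`.

If `a ≥ 35`, Lagrange's theorem writes `N` as a sum of four squares, and
`x² = x(x-1)/2 + (x+1)x/2` turns these into eight triangular numbers (`exists_two_triangular`);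
the bound holds because `x ≤ √(2a - 2)` is small compared with `a / 4`. If `a ≤ 34`, then
`N ≤ 66`, and the triangular numbers `0, 1, 3, 6` suffice (`sum_small_triangular`); the value `6`,
that is `b = 4`, is available once `a ≥ 15`, and for `a = 14` it is not needed since `N ≤ 26`.
-/

/-- A square is a sum of two consecutive triangular numbers. The case `x = 0` is special since
the indices must stay positive. -/
lemma exists_two_triangular (x : ℕ) : ∃ b c : ℤ, 0 < b ∧ 0 < c ∧ b ≤ x + 1 ∧ c ≤ x + 1 ∧
    b * (b - 1) / 2 + c * (c - 1) / 2 = (x : ℤ) ^ 2 := by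
  rcases Nat.eq_zero_or_pos x with rfl | hx
  · exact ⟨1, 1, by norm_num⟩
  · refine ⟨x, x + 1, by omega, by omega, by omega, by omega, ?_⟩
    obtain ⟨k, hk⟩ := Int.even_mul_pred_self (x : ℤ)
    have h1 : (x : ℤ) * (x - 1) / 2 = k := by omega
    have h2 : ((x : ℤ) + 1) * (x + 1 - 1) = 2 * (k + x) := by linarith
    rw [h1, h2, Int.mul_ediv_cancel_left _ (by norm_num)]
    linarith

/-- The sequence with `q` entries `4`, then `s` entries `3`, then `r` entries `2`, then ones;
the corresponding triangular numbers `b(b-1)/2` are `6, 3, 1, 0`. -/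
def smallSeq (q s r : ℕ) (i : Fin 15) : ℤ :=
  if i.val < q then 4 else if i.val < q + s then 3 else if i.val < q + s + r then 2 else 1

set_option maxRecDepth 100000 in
lemma sum_small_triangular : ∀ q < 12, ∀ s < 9, ∀ r < 3, q + s + r ≤ 15 →
    ∑ i, smallSeq q s r i * (smallSeq q s r i - 1) / 2 = ((6 * q + 3 * s + r : ℕ) : ℤ) := by
  decide +kernel

/-- If `x² ≤ 2k` with `k ≥ 34`, then indices up to `x + 1` obey the bound for `a = k + 1`. -/
lemma four_mul_add_two_lt {k x : ℕ} (hk : 34 ≤ k) (hx : x ^ 2 ≤ 2 * k) : 4 * x + 2 < k + 1 := by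
  by_contra! h
  nlinarith

/-- Every integer `n ≥ 187` can be written as `n = a² − Σᵢ₌₁¹⁵ aᵢ(aᵢ−1)/2` with
positive integers `a, a₁, …, a₁₅` satisfying `a > 4 aᵢ − 2` for every `i`. -/
theorem repr_a_sq_minus_fifteen_triangular_strong (n : ℤ) (hn : 187 ≤ n) :
    ∃ (a : ℤ) (b : Fin 15 → ℤ), 0 < a ∧ (∀ i, 0 < b i) ∧
      (∀ i, 4 * b i - 2 < a) ∧ n = a ^ 2 - ∑ i, b i * (b i - 1) / 2 := by
  -- `k = a - 1` is the largest integer with `k² < n`.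
  obtain ⟨k, hk1, hk2⟩ : ∃ k : ℕ, (k : ℤ) ^ 2 < n ∧ n ≤ ((k : ℤ) + 1) ^ 2 := by
    obtain ⟨m, rfl⟩ : ∃ m : ℕ, n = m + 1 := ⟨(n - 1).toNat, by omega⟩
    have h1 := Nat.sqrt_le' m
    have h2 := Nat.lt_succ_sqrt' m
    refine ⟨m.sqrt, ?_, ?_⟩ <;> norm_cast <;> omega
  have hk : 13 ≤ k := by
    by_contra! h
    have : (k : ℤ) ≤ 12 := by omega
    nlinarith
  obtain ⟨N, hN⟩ : ∃ N : ℕ, ((k : ℤ) + 1) ^ 2 - n = N := ⟨_, (Int.toNat_of_nonneg (by linarith)).symm⟩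
  have hNk : N ≤ 2 * k := by
    have : (N : ℤ) < 2 * k + 1 := by linarith
    omega
  suffices h : ∃ b : Fin 15 → ℤ, (∀ i, 0 < b i) ∧ (∀ i, 4 * b i - 2 < (k : ℤ) + 1) ∧
      ∑ i, b i * (b i - 1) / 2 = (N : ℤ) by
    obtain ⟨b, h0, h1, h2⟩ := h
    exact ⟨k + 1, b, by omega, h0, h1, by linarith⟩
  rcases Nat.lt_or_ge k 34 with hlt | hge
  · rcases Nat.lt_or_ge k 14 with h13 | h14
    · refine ⟨smallSeq 0 (N / 3) (N % 3), fun i => ?_, fun i => ?_, ?_⟩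
      · unfold smallSeq; split_ifs <;> norm_num
      · unfold smallSeq; split_ifs <;> omega
      · rw [sum_small_triangular _ (by omega) _ (by omega) _ (by omega) (by omega)]
        omega
    · refine ⟨smallSeq (N / 6) (N % 6 / 3) (N % 3), fun i => ?_, fun i => ?_, ?_⟩
      · unfold smallSeq; split_ifs <;> norm_num
      · unfold smallSeq; split_ifs <;> omega
      · rw [sum_small_triangular _ (by omega) _ (by omega) _ (by omega) (by omega)]
        omega
  · obtain ⟨x, y, z, w, hs⟩ := Nat.sum_four_squares N
    have hx := four_mul_add_two_lt hge (x := x) (by nlinarith)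
    have hy := four_mul_add_two_lt hge (x := y) (by nlinarith)
    have hz := four_mul_add_two_lt hge (x := z) (by nlinarith)
    have hw := four_mul_add_two_lt hge (x := w) (by nlinarith)
    obtain ⟨b1, c1, p1, q1, r1, s1, t1⟩ := exists_two_triangular x
    obtain ⟨b2, c2, p2, q2, r2, s2, t2⟩ := exists_two_triangular y
    obtain ⟨b3, c3, p3, q3, r3, s3, t3⟩ := exists_two_triangular z
    obtain ⟨b4, c4, p4, q4, r4, s4, t4⟩ := exists_two_triangular w
    refine ⟨![b1, c1, b2, c2, b3, c3, b4, c4, 1, 1, 1, 1, 1, 1, 1], fun i => ?_, fun i => ?_, ?_⟩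
    · fin_cases i <;> first | assumption | exact one_pos
    · fin_cases i <;> simp <;> omega
    · rw [← hs]
      push_cast
      simp [Fin.sum_univ_succ]
      linarith
end
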